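/- Let ℓ ∈ {1, 2, 3} and let δ_ℓ(ξ³) := lim_{i→∞} {x_{ℓ+6i,0}·ξ³} (this limit exists). There exist constants c₄, c₅ > 0 such that for every integer k ≥ 1 with k ≢ ℓ (mod 3) there is an integer y_k with gcd(x_{k,0}, y_k) dividing 2 and c₄·B_k ≤ |x_{k,0}·δ_ℓ(ξ³) − y_k| ≤ c₅·B_k, where B_k = 1/X_{k+1} if k ≡ ℓ+1 (mod 3) and B_k = 1/X_{k+2} if k ≡ ℓ+2 (mod 3). Moreover, for all sufficiently large such k, the rational number y_k/x_{k,0} is a convergent of the continued fraction expansion of δ_ℓ(ξ³) whose denominator in lowest terms is |x_{k,0}| or |x_{k,0}|/2, and there exist constants c₆, c₇ > 0 such that every other convergent p/q of δ_ℓ(ξ³) in lowest terms satisfies c₆/q ≤ |q·δ_ℓ(ξ³) − p| ≤ c₇/q. -/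

import Mathlib

open Polynomial Filter

noncomputable def gold : ℝ := (1 + Real.sqrt 5) / 2

def Mmat (k : ℕ) : Matrix (Fin 2) (Fin 2) ℤ := !![3, (-1)^k; (-1)^(k+1), 0]

noncomputable def Xnorm (x : ℕ → Matrix (Fin 2) (Fin 2) ℤ) (k : ℕ) : ℝ :=
  max |(x k 0 0 : ℝ)| (max |(x k 0 1 : ℝ)| |(x k 1 1 : ℝ)|)

def MarkoffSeq (ξ : ℝ) (x : ℕ → Matrix (Fin 2) (Fin 2) ℤ) : Prop :=
  (∀ k, 1 ≤ k → x k 0 1 = x k 1 0) ∧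
  (∀ k, 1 ≤ k → (x k).det = 1) ∧
  ∃ c₁ c₂ c₃ : ℝ, 0 < c₁ ∧ 0 < c₂ ∧ 0 < c₃ ∧ ∀ k, 1 ≤ k →
    (c₁ * Xnorm x k ^ gold ≤ Xnorm x (k+1) ∧ Xnorm x (k+1) ≤ c₂ * Xnorm x k ^ gold) ∧
    (|(x k 0 0 : ℝ) * ξ - (x k 0 1 : ℝ)| ≤ c₃ / Xnorm x k ∧
     |(x k 0 1 : ℝ) * ξ - (x k 1 1 : ℝ)| ≤ c₃ / Xnorm x k) ∧
    (x (k+2) = x (k+1) * Mmat (k+1) * x k ∧ x (k+2) = x k * Mmat k * x (k+1)) ∧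
    (Xnorm x k < Xnorm x (k+1) ∧ Xnorm x k < (1 + ξ^2) * |(x k 0 0 : ℝ)|)

def polyNorm (P : Polynomial ℤ) : ℕ := P.support.sup fun i => (P.coeff i).natAbs

noncomputable def distInt (η : ℝ) : ℝ := |η - round η|

noncomputable def ratHeight (α : ℚ) : ℝ := max |(α.num : ℝ)| (α.den : ℝ)

def IsMinIntPoly (α : ℂ) (P : Polynomial ℤ) : Prop :=
  P ≠ 0 ∧ Polynomial.aeval α P = 0 ∧ P.content = 1 ∧ 0 < P.leadingCoeff ∧
  ∀ Q : Polynomial ℤ, Q ≠ 0 → Polynomial.aeval α Q = 0 → P.degree ≤ Q.degree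

noncomputable def Qpoly (x : ℕ → Matrix (Fin 2) (Fin 2) ℤ) (k : ℕ) : Polynomial ℤ :=
  Polynomial.C (x k 0 1 * x (k+1) 1 1 - x k 1 1 * x (k+1) 0 1)
  - Polynomial.C (x k 0 0 * x (k+1) 1 1 - x k 1 1 * x (k+1) 0 0) * Polynomial.X
  + Polynomial.C (x k 0 0 * x (k+1) 0 1 - x k 0 1 * x (k+1) 0 0) * Polynomial.X ^ 2

/-- The algebraic and metric data carried by the entries `(a k, b k; b k, c k)` of the matrices of a
Markoff sequence, with `X k` comparable to the size of the `k`-th matrix. -/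
structure MarkoffData (ξ : ℝ) (a b c : ℕ → ℤ) (X : ℕ → ℝ) (C D κ : ℝ) : Prop where
  det : ∀ k, 1 ≤ k → a k * c k - b k ^ 2 = 1
  rec_a : ∀ k, 1 ≤ k →
    a (k+2) = (3 * a k - (-1)^k * b k) * a (k+1) + (-1)^k * a k * b (k+1)
  rec_b : ∀ k, 1 ≤ k →
    b (k+2) = (3 * a k - (-1)^k * b k) * b (k+1) + (-1)^k * a k * c (k+1)
  rec_b' : ∀ k, 1 ≤ k →
    b (k+2) = (3 * b k - (-1)^k * c k) * a (k+1) + (-1)^k * b k * b (k+1)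
  rec_c : ∀ k, 1 ≤ k →
    c (k+2) = (3 * b k - (-1)^k * c k) * b (k+1) + (-1)^k * b k * c (k+1)
  C_pos : 0 < C
  D_pos : 0 < D
  κ_pos : 0 < κ
  approx_b : ∀ k, 1 ≤ k → |(a k : ℝ) * ξ - b k| ≤ C / X k
  approx_c : ∀ k, 1 ≤ k → |(b k : ℝ) * ξ - c k| ≤ C / X k
  one_le : ∀ k, 1 ≤ k → 1 ≤ X k
  a_le : ∀ k, 1 ≤ k → |(a k : ℝ)| ≤ X k
  b_le : ∀ k, 1 ≤ k → |(b k : ℝ)| ≤ X k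
  c_le : ∀ k, 1 ≤ k → |(c k : ℝ)| ≤ X k
  le_a : ∀ k, 1 ≤ k → X k ≤ D * |(a k : ℝ)|
  lt_succ : ∀ k, 1 ≤ k → X k < X (k+1)
  tendsto : Tendsto X atTop atTop
  mul_le : ∀ k, 1 ≤ k → κ * (X k * X (k+1)) ≤ X (k+2)

namespace MarkoffData

variable {ξ : ℝ} {a b c : ℕ → ℤ} {X : ℕ → ℝ} {C D κ : ℝ}

lemma neg_one_pow_mul_self (k : ℕ) : ((-1 : ℤ)^k) * (-1)^k = 1 := by
  rw [← mul_pow]; simp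

lemma a_add_three (h : MarkoffData ξ a b c X C D κ) {k : ℕ} (hk : 1 ≤ k) :
    a (k+3) = 3 * a (k+1) * a (k+2) - a k := by
  have h1 := h.rec_a k hk
  have h2 := h.rec_b k hk
  have h3 := h.rec_a (k+1) (by omega)
  have h4 := h.det (k+1) (by omega)
  have h5 := neg_one_pow_mul_self k
  simp only [pow_succ, show k + 1 + 2 = k + 3 from rfl, show k + 1 + 1 = k + 2 from rfl] at *
  set e : ℤ := (-1)^k
  linear_combination h3 - e * a (k+1) * h2 + e * b (k+1) * h1 - a k * h4
    + (a k * b (k+1)^2 - a k * a (k+1) * c (k+1)) * h5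

lemma b_add_three (h : MarkoffData ξ a b c X C D κ) {k : ℕ} (hk : 1 ≤ k) :
    b (k+3) = 3 * a (k+1) * b (k+2) - b k := by
  have h1 := h.rec_b' k hk
  have h2 := h.rec_c k hk
  have h3 := h.rec_b (k+1) (by omega)
  have h4 := h.det (k+1) (by omega)
  have h5 := neg_one_pow_mul_self k
  simp only [pow_succ, show k + 1 + 2 = k + 3 from rfl, show k + 1 + 1 = k + 2 from rfl] at *
  set e : ℤ := (-1)^k
  linear_combination h3 - e * a (k+1) * h2 + e * b (k+1) * h1 - b k * h4
    + (b k * b (k+1)^2 - b k * a (k+1) * c (k+1)) * h5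

lemma c_add_three (h : MarkoffData ξ a b c X C D κ) {k : ℕ} (hk : 1 ≤ k) :
    c (k+3) = 3 * a (k+1) * c (k+2) - c k := by
  have h1 := h.rec_b' k hk
  have h2 := h.rec_c k hk
  have h3 := h.rec_c (k+1) (by omega)
  have h4 := h.det (k+1) (by omega)
  have h5 := neg_one_pow_mul_self k
  simp only [pow_succ, show k + 1 + 2 = k + 3 from rfl, show k + 1 + 1 = k + 2 from rfl] at *
  set e : ℤ := (-1)^k
  linear_combination h3 + (3 * b (k+1) + e * c (k+1)) * h1 - (3 * a (k+1) + e * b (k+1)) * h2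
    - c k * h4 + (c k * b (k+1)^2 - c k * a (k+1) * c (k+1)) * h5

lemma trace_one (h : MarkoffData ξ a b c X C D κ) {k : ℕ} (hk : 1 ≤ k) :
    a k * c (k+1) = 2 * b k * b (k+1) - c k * a (k+1) + 3 * (3 * a k * a (k+1) - a (k+2)) := by
  have h1 := h.rec_a k hk
  have h2 := h.rec_b k hk
  have h3 := h.rec_b' k hk
  have h5 := neg_one_pow_mul_self k
  set e : ℤ := (-1)^k
  linear_combination 3 * h1 + e * (h3 - h2)
    - (a k * c (k+1) - 2 * b k * b (k+1) + c k * a (k+1)) * h5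

lemma trace_two (h : MarkoffData ξ a b c X C D κ) {k : ℕ} (hk : 1 ≤ k) :
    a k * c (k+2) = 2 * b k * b (k+2) - c k * a (k+2) + 3 * a (k+1) := by
  have h1 := h.rec_a k hk
  have h2 := h.rec_b k hk
  have h3 := h.rec_b' k hk
  have h4 := h.rec_c k hk
  have h5 := h.det k hk
  set e : ℤ := (-1)^k
  linear_combination a k * h4 - b k * (h2 + h3) + c k * h1 + 3 * a (k+1) * h5

lemma trace_one_succ (h : MarkoffData ξ a b c X C D κ) {k : ℕ} (hk : 1 ≤ k) :
    a (k+1) * c (k+2) = 2 * b (k+1) * b (k+2) - c (k+1) * a (k+2) + 3 * a k := by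
  linear_combination h.trace_one (k := k+1) (by omega) - 3 * h.a_add_three hk

lemma trace_four (h : MarkoffData ξ a b c X C D κ) {k : ℕ} (hk : 1 ≤ k) :
    a k * c (k+4) = 2 * b k * b (k+4) - c k * a (k+4)
      + (9 * a (k+1) * a (k+3) - 3 * a (k+2)) := by
  have ha := h.a_add_three (k := k+1) (by omega)
  have hb := h.b_add_three (k := k+1) (by omega)
  have hc := h.c_add_three (k := k+1) (by omega)
  have ha' := h.a_add_three hk
  have hb' := h.b_add_three hk
  have hc' := h.c_add_three hk
  have h1 := h.trace_one hk
  have h2 := h.trace_two hk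
  have h0 := h.det k hk
  simp only [show k + 1 + 3 = k + 4 from rfl, show k + 1 + 1 = k + 2 from rfl,
    show k + 1 + 2 = k + 3 from rfl] at *
  rw [ha, hb, hc, ha', hb', hc']
  linear_combination 9 * a (k+1) * a (k+2) * h2 - 6 * a (k+2) * h0 - h1

end MarkoffData

/-- The unit witnessing the coprimality condition for `k + 2`, read modulo `a k`. -/
lemma unit_mul_two {R : Type*} [CommRing R] {e b c a' b' c' b'' c'' : R} (he : e * e = 1)
    (hb : -b^2 = 1) (hd : a' * c' - b'^2 = 1) (h1 : b'' = -e * b * b')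
    (h2 : b'' = (3 * b - e * c) * a' + e * b * b') (h3 : c'' = (3 * b - e * c) * b' + e * b * c') :
    (-e * a') * (2 * b * c'' - c * b'' + 3 * b') = 2 := by
  have hs : (3 * b - e * c) * a' = -2 * e * b * b' := by linear_combination h1 - h2
  have key : 2 * b * c'' - c * b'' + 3 * b' = b * b' * (3 * b - e * c) - 2 * e * c' := by
    rw [h3, h1]
    linear_combination (-3 * b' - 2 * e * c') * hb
  rw [key]
  linear_combination (-e * b * b') * hs + 2 * b ^2 * b'^2 * he + 2 * a' * c' * he + 2 * hd
    - 2 * b'^2 * hb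

/-- The unit witnessing the coprimality condition for `k + 4`, read modulo `a k`. -/
lemma unit_mul_four {R : Type*} [CommRing R] {e b c a' b' c' a'' b'' c'' b₃ b₄ c₄ : R}
    (he : e * e = 1)
    (hb : -b^2 = 1) (hd : a' * c' - b'^2 = 1) (h0 : a'' = -e * b * a') (h1 : b'' = -e * b * b')
    (h2 : b'' = (3 * b - e * c) * a' + e * b * b') (h3 : c'' = (3 * b - e * c) * b' + e * b * c')
    (h4 : b₃ = 3 * a' * b'' - b) (h5 : b₄ = 9 * a' * a'' * b'' - 3 * a'' * b - b')
    (h6 : c₄ = 9 * a' * a'' * c'' - 3 * a'' * c - c') :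
    (b * a') * (2 * b * c₄ - c * b₄ + (9 * a' * b₃ - 3 * b'')) = 2 := by
  have hs : (3 * b - e * c) * a' = -2 * e * b * b' := by linear_combination h1 - h2
  have key : 2 * b * c₄ - c * b₄ + (9 * a' * b₃ - 3 * b'') =
     -(2 * b * c' + e * b' * (3 * b - e * c)) := by
    rw [h4, h5, h6, h0, h1, h3]
    clear h0 h1 h2 h3 h4 h5 h6
    grind
  rw [key]
  linear_combination -e * b * b' * hs + (2*b^2*b'^2) * he + 2 * hd - 2 * (a' * c' - b'^2) * (-hb)

lemma gcd_dvd_two_of_dvd {a u N : ℤ} (h : a ∣ u * N - 2) : Int.gcd a N ∣ 2 := by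
  have h1 : (Int.gcd a N : ℤ) ∣ u * N - 2 := (Int.gcd_dvd_left a N).trans h
  have h2 : (Int.gcd a N : ℤ) ∣ u * N := (Int.gcd_dvd_right a N).mul_left u
  have h3 : (Int.gcd a N : ℤ) ∣ 2 := by
    have := dvd_sub h2 h1
    simpa using this
  exact_mod_cast h3

namespace MarkoffData

variable {ξ : ℝ} {a b c : ℕ → ℤ} {X : ℕ → ℝ} {C D κ : ℝ}

lemma X_pos (h : MarkoffData ξ a b c X C D κ) {k : ℕ} (hk : 1 ≤ k) : 0 < X k :=
  zero_lt_one.trans_le (h.one_le k hk)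

lemma X_mono (h : MarkoffData ξ a b c X C D κ) {j k : ℕ} (hj : 1 ≤ j) (hjk : j ≤ k) :
    X j ≤ X k := by
  induction k, hjk using Nat.le_induction with
  | base => exact le_rfl
  | succ n hn ih => exact ih.trans (h.lt_succ n (hj.trans hn)).le

lemma ratio_le (h : MarkoffData ξ a b c X C D κ) {k : ℕ} (hk : 1 ≤ k) :
    X k / X (k+2) ≤ κ⁻¹ / X (k+1) := by
  have h0 := h.X_pos hk
  have h1 := h.X_pos (k := k+1) (by omega)
  have h2 := h.X_pos (k := k+2) (by omega)
  have := h.mul_le k hk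
  have hκ := h.κ_pos
  rw [div_le_div_iff₀ h2 h1, ← div_eq_inv_mul, le_div_iff₀ hκ]
  linarith

/-- If `a k * c m` is computed from the trace form with trace `t`, then `a k * c m * ξ` is close to
an integer as soon as `t * ξ` is. -/
lemma abs_mul_sub_le (h : MarkoffData ξ a b c X C D κ) {k m : ℕ} (hk : 1 ≤ k) (hm : 1 ≤ m)
    {t t' : ℤ} {E : ℝ} (ht : a k * c m = 2 * b k * b m - c k * a m + t)
    (hE : |(t : ℝ) * ξ - t'| ≤ E) :
    |(a k : ℝ) * (c m * ξ) - ((2 * b k * c m - c k * b m + t' : ℤ) : ℝ)|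
      ≤ 3 * C * (X k / X m) + E := by
  have ht' : (a k : ℝ) * c m = 2 * b k * b m - c k * a m + t := by exact_mod_cast ht
  have e : (a k : ℝ) * (c m * ξ) - ((2 * b k * c m - c k * b m + t' : ℤ) : ℝ)
      = 2 * b k * (b m * ξ - c m) - c k * (a m * ξ - b m) + (t * ξ - t') := by
    push_cast
    linear_combination ξ * ht'
  have h1 : |(b k : ℝ) * (b m * ξ - c m)| ≤ X k * (C / X m) := by
    rw [abs_mul]
    exact mul_le_mul (h.b_le k hk) (h.approx_c m hm) (abs_nonneg _) (h.X_pos hk).le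
  have h2 : |(c k : ℝ) * (a m * ξ - b m)| ≤ X k * (C / X m) := by
    rw [abs_mul]
    exact mul_le_mul (h.c_le k hk) (h.approx_b m hm) (abs_nonneg _) (h.X_pos hk).le
  have h3 : X k * (C / X m) = C * (X k / X m) := by ring
  rw [e]
  rw [h3] at h1 h2
  rw [abs_le] at *
  constructor <;> linarith [h1.1, h1.2, h2.1, h2.2, hE.1, hE.2]

lemma exists_int_near_two (h : MarkoffData ξ a b c X C D κ) {k : ℕ} (hk : 1 ≤ k) :
    ∃ N : ℤ, Int.gcd (a k) N ∣ 2 ∧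
      |(a k : ℝ) * (c (k+2) * ξ) - N| ≤ (3 * C * κ⁻¹ + 3 * C) / X (k+1) := by
  refine ⟨2 * b k * c (k+2) - c k * b (k+2) + 3 * b (k+1), ?_, ?_⟩
  · apply gcd_dvd_two_of_dvd (u := -(-1)^k * a (k+1))
    rw [← Int.natAbs_dvd, ← ZMod.intCast_zmod_eq_zero_iff_dvd]
    have ha : ((a k : ℤ) : ZMod (a k).natAbs) = 0 := by
      rw [ZMod.intCast_zmod_eq_zero_iff_dvd, Int.natAbs_dvd]
    have cast : ∀ {u v : ℤ}, u = v → ((u : ℤ) : ZMod (a k).natAbs) = v := by rintro _ _ rfl; rfl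
    have h0 := cast (h.det k hk)
    have h1 := cast (h.det (k+1) (by omega))
    have h2 := cast (h.rec_b k hk)
    have h3 := cast (h.rec_b' k hk)
    have h4 := cast (h.rec_c k hk)
    have h5 := cast (neg_one_pow_mul_self k)
    push_cast at h0 h1 h2 h3 h4 h5 ⊢
    rw [ha] at h0 h2
    rw [sub_eq_zero]
    exact unit_mul_two h5
      (by linear_combination h0) h1 (by linear_combination h2) h3 h4
  · refine (h.abs_mul_sub_le hk (by omega) (E := 3 * C / X (k+1)) (h.trace_two hk) ?_).trans ?_
    · have := h.approx_b (k+1) (by omega)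
      have e : ((3 * a (k+1) : ℤ) : ℝ) * ξ - (3 * b (k+1) : ℤ) = 3 * (a (k+1) * ξ - b (k+1)) := by
        push_cast; ring
      rw [e, abs_mul, abs_of_pos (by norm_num : (0:ℝ) < 3), mul_div_assoc]
      linarith
    · have := mul_le_mul_of_nonneg_left (h.ratio_le hk) (mul_pos three_pos h.C_pos).le
      rw [add_div, mul_div_assoc (3 * C) κ⁻¹]
      linarith

lemma exists_int_near_four (h : MarkoffData ξ a b c X C D κ) {k : ℕ} (hk : 1 ≤ k) :
    ∃ N : ℤ, Int.gcd (a k) N ∣ 2 ∧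
      |(a k : ℝ) * (c (k+4) * ξ) - N| ≤ (3 * C * κ⁻¹ + 9 * C * κ⁻¹ + 3 * C) / X (k+2) := by
  refine ⟨2 * b k * c (k+4) - c k * b (k+4) + (9 * a (k+1) * b (k+3) - 3 * b (k+2)), ?_, ?_⟩
  · apply gcd_dvd_two_of_dvd (u := b k * a (k+1))
    rw [← Int.natAbs_dvd, ← ZMod.intCast_zmod_eq_zero_iff_dvd]
    have ha : ((a k : ℤ) : ZMod (a k).natAbs) = 0 := by
      rw [ZMod.intCast_zmod_eq_zero_iff_dvd, Int.natAbs_dvd]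
    have cast : ∀ {u v : ℤ}, u = v → ((u : ℤ) : ZMod (a k).natAbs) = v := by rintro _ _ rfl; rfl
    have h0 := cast (h.det k hk)
    have h1 := cast (h.det (k+1) (by omega))
    have h2 := cast (h.rec_b k hk)
    have h3 := cast (h.rec_b' k hk)
    have h4 := cast (h.rec_c k hk)
    have h5 := cast (neg_one_pow_mul_self k)
    have h6 := cast (h.rec_a k hk)
    have h7 := cast (h.b_add_three hk)
    have h8 := cast (h.b_add_three (k := k+1) (by omega))
    have h9 := cast (h.c_add_three (k := k+1) (by omega))
    have h10 := cast (h.c_add_three hk)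
    simp only [show k + 1 + 3 = k + 4 from rfl, show k + 1 + 1 = k + 2 from rfl,
      show k + 1 + 2 = k + 3 from rfl] at h8 h9
    push_cast at h0 h1 h2 h3 h4 h5 h6 h7 h8 h9 h10 ⊢
    rw [h7] at h8
    rw [h10] at h9
    rw [ha] at h0 h2 h6
    rw [sub_eq_zero]
    exact unit_mul_four (a'' := (a (k+2) : ZMod (a k).natAbs)) h5
      (by linear_combination h0) h1 (by linear_combination h6)
      (by linear_combination h2) h3 h4 h7 (by linear_combination h8) (by linear_combination h9)
  · refine (h.abs_mul_sub_le hk (by omega)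
      (E := 9 * C * (X (k+1) / X (k+3)) + 3 * C / X (k+2)) (h.trace_four hk) ?_).trans ?_
    · have h1 := h.approx_b (k+2) (by omega)
      have h2 : |(a (k+1) : ℝ) * (a (k+3) * ξ - b (k+3))| ≤ X (k+1) * (C / X (k+3)) := by
        rw [abs_mul]
        exact mul_le_mul (h.a_le _ (by omega)) (h.approx_b _ (by omega)) (abs_nonneg _)
          (h.X_pos (by omega)).le
      have e : ((9 * a (k+1) * a (k+3) - 3 * a (k+2) : ℤ) : ℝ) * ξ
          - (9 * a (k+1) * b (k+3) - 3 * b (k+2) : ℤ)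
          = 9 * (a (k+1) * (a (k+3) * ξ - b (k+3))) - 3 * (a (k+2) * ξ - b (k+2)) := by
        push_cast; ring
      have h3 : X (k+1) * (C / X (k+3)) = C * (X (k+1) / X (k+3)) := by ring
      rw [h3] at h2
      rw [e, mul_div_assoc]
      rw [abs_le] at *
      constructor <;> linarith [h1.1, h1.2, h2.1, h2.2]
    · have hC := h.C_pos
      have hκ := inv_pos.2 h.κ_pos
      have p2 := h.X_pos (k := k+2) (by omega)
      have p4 := h.X_pos (k := k+4) (by omega)
      have h1 : X (k+1) / X (k+3) ≤ κ⁻¹ / X (k+2) := h.ratio_le (k := k+1) (by omega)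
      have h2 : X k / X (k+4) ≤ κ⁻¹ / X (k+2) :=
        calc X k / X (k+4) ≤ X (k+2) / X (k+4) := by
              gcongr; exact h.X_mono hk (by omega)
          _ ≤ κ⁻¹ / X (k+3) := h.ratio_le (k := k+2) (by omega)
          _ ≤ κ⁻¹ / X (k+2) := by gcongr; exact h.X_mono (by omega) (by omega)
      have h1' := mul_le_mul_of_nonneg_left h1 (by positivity : 0 ≤ 9 * C)
      have h2' := mul_le_mul_of_nonneg_left h2 (by positivity : 0 ≤ 3 * C)
      rw [add_div, add_div, mul_div_assoc (3 * C) κ⁻¹, mul_div_assoc (9 * C) κ⁻¹]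
      linarith

lemma exists_int_near_add (h : MarkoffData ξ a b c X C D κ) {k : ℕ} (hk : 1 ≤ k) :
    ∃ n : ℤ, |(c (k+3) * ξ + c k * ξ : ℝ) - n| ≤ (9 * C * κ⁻¹ + 9 * C) / X k := by
  refine ⟨3 * (2 * b (k+1) * c (k+2) - c (k+1) * b (k+2) + 3 * b k), ?_⟩
  have key := h.abs_mul_sub_le (k := k+1) (m := k+2) (by omega) (by omega) (t' := 3 * b k)
    (E := 3 * C / X k) (h.trace_one_succ hk) (by
      have := h.approx_b k hk
      have e : ((3 * a k : ℤ) : ℝ) * ξ - (3 * b k : ℤ) = 3 * (a k * ξ - b k) := by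
        push_cast; ring
      rw [e, abs_mul, abs_of_pos (by norm_num : (0:ℝ) < 3), mul_div_assoc]
      linarith)
  have hc : (c (k+3) : ℝ) = 3 * a (k+1) * c (k+2) - c k := by exact_mod_cast h.c_add_three hk
  have e : (c (k+3) * ξ + c k * ξ : ℝ)
      - (3 * (2 * b (k+1) * c (k+2) - c (k+1) * b (k+2) + 3 * b k) : ℤ)
      = 3 * ((a (k+1) : ℝ) * (c (k+2) * ξ)
        - ((2 * b (k+1) * c (k+2) - c (k+1) * b (k+2) + 3 * b k : ℤ) : ℝ)) := by
    rw [hc]; push_cast; ring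
  rw [e, abs_mul, abs_of_pos (by norm_num : (0:ℝ) < 3)]
  have h0 := h.X_pos hk
  have h1 := h.X_pos (k := k+1) (by omega)
  have h2 := h.X_pos (k := k+2) (by omega)
  have hκ := h.κ_pos
  have hr : X (k+1) / X (k+2) ≤ κ⁻¹ / X k := by
    rw [div_le_div_iff₀ h2 h0, ← div_eq_inv_mul, le_div_iff₀ hκ]
    linarith [h.mul_le k hk]
  have := mul_le_mul_of_nonneg_left hr (mul_pos three_pos h.C_pos).le
  have e2 : (9 * C * κ⁻¹ + 9 * C) / X k = 3 * (3 * C * (κ⁻¹ / X k) + 3 * C / X k) := by ring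
  rw [e2]
  linarith

end MarkoffData

lemma exists_pos_le_of_eventually {f : ℕ → ℝ} {P : ℕ → Prop} (hf : ∀ k, P k → 0 < f k)
    {ε : ℝ} (hε : 0 < ε) (h : ∀ᶠ k in atTop, P k → ε ≤ f k) :
    ∃ ε' : ℝ, 0 < ε' ∧ ∀ k, P k → ε' ≤ f k := by
  obtain ⟨N, hN⟩ := eventually_atTop.1 h
  have key : ∀ M : ℕ, ∃ ε' : ℝ, 0 < ε' ∧ ∀ k, k < M → P k → ε' ≤ f k := by
    intro M
    induction M with
    | zero => exact ⟨1, one_pos, fun k hk => absurd hk (by omega)⟩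
    | succ M ih =>
      obtain ⟨e, he, hM⟩ := ih
      by_cases hP : P M
      · refine ⟨min e (f M), lt_min he (hf M hP), fun k hk hPk => ?_⟩
        rcases Nat.lt_succ_iff_lt_or_eq.1 hk with hk | rfl
        · exact (min_le_left _ _).trans (hM k hk hPk)
        · exact min_le_right _ _
      · refine ⟨e, he, fun k hk hPk => ?_⟩
        rcases Nat.lt_succ_iff_lt_or_eq.1 hk with hk | rfl
        · exact hM k hk hPk
        · exact absurd hPk hP
  obtain ⟨e, he, hM⟩ := key N
  refine ⟨min e ε, lt_min he hε, fun k hPk => ?_⟩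
  rcases lt_or_ge k N with hk | hk
  · exact (min_le_left _ _).trans (hM k hk hPk)
  · exact (min_le_right _ _).trans (hN k hk hPk)

lemma exists_abs_sub_le_of_telescope {w g : ℕ → ℝ} (hg : Tendsto g atTop (nhds 0))
    (h : ∀ i, |w (i+1) - w i| ≤ g i - g (i+1)) : ∃ θ : ℝ, ∀ i, |w i - θ| ≤ g i := by
  have step : ∀ i j, i ≤ j → |w j - w i| ≤ g i - g j := by
    intro i j hij
    induction j, hij using Nat.le_induction with
    | base => simp
    | succ n hn ih =>
      have := abs_sub_le (w (n+1)) (w n) (w i)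
      linarith [h n]
  have hanti : Antitone g := antitone_nat_of_succ_le fun n => by
    linarith [h n, abs_nonneg (w (n+1) - w n)]
  have hpos : ∀ i, 0 ≤ g i := fun i => hanti.le_of_tendsto hg i
  have hc : CauchySeq w := cauchySeq_of_le_tendsto_0' g (fun n m hnm => by
    rw [dist_comm, Real.dist_eq]
    linarith [step n m hnm, hpos m]) hg
  obtain ⟨θ, hθ⟩ := cauchySeq_tendsto_of_complete hc
  refine ⟨θ, fun i => ?_⟩
  have h1 : Tendsto (fun j => |w i - w j|) atTop (nhds |w i - θ|) :=
    (tendsto_const_nhds.sub hθ).abs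
  refine le_of_tendsto h1 (eventually_atTop.2 ⟨i, fun j hj => ?_⟩)
  rw [abs_sub_comm]
  linarith [step i j hj, hpos j]

lemma distInt_le (u : ℝ) (n : ℤ) : distInt u ≤ |u - n| := round_le u n

lemma distInt_le_add (u v : ℝ) {s n : ℤ} (hs : s = 1 ∨ s = -1) :
    distInt u ≤ distInt v + |u - (s * v + n)| := by
  refine (distInt_le u (s * round v + n)).trans ?_
  have hs' : |(s : ℝ)| = 1 := by rcases hs with rfl | rfl <;> simp
  have e : u - ((s * round v + n : ℤ) : ℝ) = (u - (s * v + n)) + s * (v - round v) := by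
    push_cast; ring
  rw [e, add_comm (distInt v)]
  refine (abs_add_le _ _).trans ?_
  rw [abs_mul, hs', one_mul]
  rfl

lemma abs_distInt_sub_le (u v : ℝ) {s n : ℤ} (hs : s = 1 ∨ s = -1) :
    |distInt u - distInt v| ≤ |u - (s * v + n)| := by
  rw [abs_le]
  have h1 := distInt_le_add u v (n := n) hs
  have h2 := distInt_le_add v u (s := s) (n := -s * n) hs
  have hss : (s : ℝ) * s = 1 := by rcases hs with rfl | rfl <;> simp
  have hs' : |(s : ℝ)| = 1 := by rcases hs with rfl | rfl <;> simp
  have e : v - (s * u + ((-s * n : ℤ) : ℝ)) = -s * (u - (s * v + n)) := by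
    push_cast; linear_combination -v * hss
  rw [e, abs_mul, abs_neg, hs', one_mul] at h2
  constructor <;> linarith

lemma exists_distInt_eq (v : ℝ) : ∃ s n : ℤ, (s = 1 ∨ s = -1) ∧ v = s * distInt v + n := by
  rcases abs_choice (v - round v) with h | h
  · exact ⟨1, round v, Or.inl rfl, by rw [distInt, h]; push_cast; ring⟩
  · exact ⟨-1, round v, Or.inr rfl, by rw [distInt, h]; push_cast; ring⟩

namespace MarkoffData

variable {ξ : ℝ} {a b c : ℕ → ℤ} {X : ℕ → ℝ} {C D κ : ℝ}

lemma exists_telescope_bound (h : MarkoffData ξ a b c X C D κ) :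
    ∃ ρ : ℝ, 0 < ρ ∧ ∀ k, 1 ≤ k → ρ / X k ≤ 1 / X k - 1 / X (k+3) := by
  obtain ⟨ρ, hρ, H⟩ := exists_pos_le_of_eventually (f := fun k => 1 - X k / X (k+3))
    (P := fun k => 1 ≤ k) (ε := 1/2) (fun k hk => by
      have h3 := h.X_pos (k := k+3) (by omega)
      have : X k < X (k+3) := (h.lt_succ k hk).trans_le (h.X_mono (by omega) (by omega))
      rw [sub_pos, div_lt_one h3]; exact this) (by norm_num) (by
      filter_upwards [h.tendsto.eventually_ge_atTop (2 * κ⁻¹)] with k hk2 hk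
      have h0 := h.X_pos hk
      have h1 := h.X_pos (k := k+1) (by omega)
      have h3 := h.X_pos (k := k+3) (by omega)
      have hκ := h.κ_pos
      have hr : X (k+1) / X (k+3) ≤ κ⁻¹ / X (k+2) := h.ratio_le (k := k+1) (by omega)
      have : X k / X (k+3) ≤ 1/2 :=
        calc X k / X (k+3) ≤ X (k+1) / X (k+3) := by gcongr; exact h.X_mono hk (by omega)
          _ ≤ κ⁻¹ / X (k+2) := hr
          _ ≤ κ⁻¹ / X k := by gcongr; exact h.X_mono hk (by omega)
          _ ≤ 1/2 := by rw [div_le_iff₀ h0]; linarith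
      linarith)
  refine ⟨ρ, hρ, fun k hk => ?_⟩
  have h0 := h.X_pos hk
  have := div_le_div_of_nonneg_right (H k hk) h0.le
  refine this.trans (le_of_eq ?_)
  have h3 := h.X_pos (k := k+3) (by omega)
  field_simp

lemma exists_limit (h : MarkoffData ξ a b c X C D κ) {l : ℕ} (hl : 1 ≤ l) :
    ∃ θ K : ℝ, 0 < K ∧ ∀ i : ℕ, ∃ s n : ℤ, (s = 1 ∨ s = -1) ∧
      |(c (l+3*i) : ℝ) * ξ - (s * θ + n)| ≤ K / X (l+3*i) := by
  obtain ⟨ρ, hρ, hX⟩ := h.exists_telescope_bound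
  have hC := h.C_pos
  have hκ := inv_pos.2 h.κ_pos
  set E := 9 * C * κ⁻¹ + 9 * C with hE
  have hEpos : 0 < E := by positivity
  choose! n hn using fun k (hk : 1 ≤ k) => h.exists_int_near_add hk
  obtain ⟨N, hN⟩ : ∃ N : ℕ → ℤ, ∀ i, N (i+1) = N i + (-1)^(i+1) * n (l+3*i) :=
    ⟨fun i => Nat.rec 0 (fun j r => r + (-1)^(j+1) * n (l+3*j)) i, fun i => rfl⟩
  obtain ⟨θ, hθ⟩ := exists_abs_sub_le_of_telescope
    (w := fun i => (-1 : ℝ)^i * (c (l+3*i) * ξ) - N i) (g := fun i => E / ρ * (1 / X (l+3*i))) (by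
      have : Tendsto (fun i : ℕ => l + 3 * i) atTop atTop :=
        tendsto_atTop_mono (fun i => (by omega : i ≤ _)) tendsto_id
      have := (h.tendsto.comp this).inv_tendsto_atTop.const_mul (E / ρ)
      simpa using this) (fun i => by
      have hk : 1 ≤ l + 3 * i := by omega
      have h1 := hn _ hk
      have h2 := mul_le_mul_of_nonneg_left (hX _ hk) (by positivity : 0 ≤ E / ρ)
      have e1 : E / ρ * (ρ / X (l+3*i)) = E / X (l+3*i) := by field_simp
      have e2 : (-1 : ℝ)^(i+1) * (c (l+3*(i+1)) * ξ) - N (i+1)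
          - ((-1 : ℝ)^i * (c (l+3*i) * ξ) - N i)
          = (-1)^(i+1) * ((c (l+3*i+3) * ξ + c (l+3*i) * ξ : ℝ) - n (l+3*i)) := by
        rw [hN, show l + 3*(i+1) = l+3*i+3 by ring]; push_cast; ring
      rw [e1] at h2
      rw [e2, abs_mul, abs_pow, abs_neg, abs_one, one_pow, one_mul]
      rw [show l + 3*(i+1) = l+3*i+3 by ring]
      linarith)
  refine ⟨θ, E / ρ, by positivity, fun i => ⟨(-1)^i, (-1)^i * N i, neg_one_pow_eq_or ℤ i, ?_⟩⟩
  have hh : ((-1 : ℝ)^i) * (-1)^i = 1 := by rw [← mul_pow]; simp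
  have e : (c (l+3*i) : ℝ) * ξ - (((-1)^i : ℤ) * θ + ((-1)^i * N i : ℤ))
      = (-1)^i * ((-1 : ℝ)^i * (c (l+3*i) * ξ) - N i - θ) := by
    push_cast; linear_combination (-(c (l+3*i) : ℝ) * ξ) * hh
  rw [e, abs_mul, abs_pow, abs_neg, abs_one, one_pow, one_mul, div_eq_mul_one_div (E / ρ)]
  exact hθ i

lemma abs_cube_sub_le (h : MarkoffData ξ a b c X C D κ) {k : ℕ} (hk : 1 ≤ k) :
    |(a k : ℝ) * ξ^3 - c k * ξ| ≤ (|ξ|^2 + |ξ|) * (C / X k) := by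
  have e : (a k : ℝ) * ξ^3 - c k * ξ = ξ^2 * (a k * ξ - b k) + ξ * (b k * ξ - c k) := by ring
  rw [e, add_mul]
  refine (abs_add_le _ _).trans (add_le_add ?_ ?_)
  · rw [abs_mul, abs_pow]
    exact mul_le_mul_of_nonneg_left (h.approx_b k hk) (by positivity)
  · rw [abs_mul]
    exact mul_le_mul_of_nonneg_left (h.approx_c k hk) (by positivity)

lemma exists_delta (h : MarkoffData ξ a b c X C D κ) {l : ℕ} (hl : 1 ≤ l) :
    ∃ δ : ℝ, Tendsto (fun i : ℕ => distInt ((a (l+6*i) : ℝ) * ξ^3)) atTop (nhds δ) ∧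
      ∃ K : ℝ, 0 < K ∧ ∀ i : ℕ, ∃ s n : ℤ, (s = 1 ∨ s = -1) ∧
        |(c (l+3*i) : ℝ) * ξ - (s * δ + n)| ≤ K / X (l+3*i) := by
  obtain ⟨θ, K, hK, H⟩ := h.exists_limit hl
  refine ⟨distInt θ, ?_, K, hK, fun i => ?_⟩
  · rw [tendsto_iff_dist_tendsto_zero]
    have hto : Tendsto (fun i : ℕ => l + 6 * i) atTop atTop :=
      tendsto_atTop_mono (fun i => (by omega : i ≤ _)) tendsto_id
    have lim := (h.tendsto.comp hto).inv_tendsto_atTop.const_mul ((|ξ|^2 + |ξ|) * C + K)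
    rw [mul_zero] at lim
    refine squeeze_zero (fun _ => dist_nonneg) (fun i => ?_) lim
    obtain ⟨s, n, hs, hn⟩ := H (2 * i)
    rw [show 3 * (2 * i) = 6 * i by ring] at hn
    rw [Real.dist_eq]
    refine (abs_distInt_sub_le _ θ (n := n) hs).trans ?_
    have := abs_sub_le ((a (l+6*i) : ℝ) * ξ^3) (c (l+6*i) * ξ) (s * θ + n)
    have h2 := h.abs_cube_sub_le (k := l+6*i) (by omega)
    have e : ((|ξ|^2 + |ξ|) * C + K) * (X ∘ fun i => l+6*i)⁻¹ i
        = (|ξ|^2 + |ξ|) * (C / X (l+6*i)) + K / X (l+6*i) := by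
      simp only [Pi.inv_apply, Function.comp_apply]; ring
    rw [e]
    linarith
  · obtain ⟨s, n, hs, hn⟩ := H i
    obtain ⟨s', n', hs', hn'⟩ := exists_distInt_eq θ
    refine ⟨s * s', s * n' + n, ?_, ?_⟩
    · rcases hs with rfl | rfl <;> rcases hs' with rfl | rfl <;> simp
    · convert hn using 3
      push_cast
      linear_combination (-s : ℝ) * hn'

/-- Transfer from `c m * ξ` to `δ` of an approximation of its multiple by `a k`. -/
lemma exists_int_near_of_sign {k m : ℕ} {δ E F : ℝ} {s n N : ℤ}
    (hs : s = 1 ∨ s = -1) (hg : Int.gcd (a k) N ∣ 2)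
    (hN : |(a k : ℝ) * (c m * ξ) - N| ≤ E)
    (hF : |(a k : ℝ)| * |(c m : ℝ) * ξ - (s * δ + n)| ≤ F) :
    ∃ y : ℤ, Int.gcd (a k) y ∣ 2 ∧ |(a k : ℝ) * δ - y| ≤ E + F := by
  have hss : (s : ℝ) * s = 1 := by rcases hs with rfl | rfl <;> simp
  have hs' : |(s : ℝ)| = 1 := by rcases hs with rfl | rfl <;> simp
  refine ⟨s * (N - n * a k), ?_, ?_⟩
  · have : Int.gcd (a k) (s * (N - n * a k)) = Int.gcd (a k) N := by
      rcases hs with rfl | rfl <;> simp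
    rwa [this]
  · have e : (a k : ℝ) * δ - (s * (N - n * a k) : ℤ)
        = s * ((a k * (c m * ξ) - N) - a k * (c m * ξ - (s * δ + n))) := by
      push_cast; linear_combination (-(a k : ℝ) * δ) * hss
    rw [e, abs_mul, hs', one_mul]
    refine (abs_sub _ _).trans (add_le_add hN ?_)
    rwa [abs_mul]

lemma exists_approximations (h : MarkoffData ξ a b c X C D κ) {l : ℕ} (hl : 1 ≤ l) (hl3 : l ≤ 3)
    {δ K : ℝ} (hK : 0 < K) (H : ∀ i : ℕ, ∃ s n : ℤ, (s = 1 ∨ s = -1) ∧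
        |(c (l+3*i) : ℝ) * ξ - (s * δ + n)| ≤ K / X (l+3*i)) :
    ∃ A : ℝ, 0 < A ∧ ∀ k, 1 ≤ k → k % 3 ≠ l % 3 → ∃ y : ℤ, Int.gcd (a k) y ∣ 2 ∧
      |(a k : ℝ) * δ - y| ≤ A * (X (if k % 3 = (l+1) % 3 then k+1 else k+2))⁻¹ := by
  have hC := h.C_pos
  have hκ := inv_pos.2 h.κ_pos
  refine ⟨(3 * C * κ⁻¹ + 9 * C * κ⁻¹ + 3 * C) + K * κ⁻¹, by positivity, fun k hk hkl => ?_⟩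
  split_ifs with hcase
  · obtain ⟨i, hi⟩ : ∃ i, k + 2 = l + 3 * i := ⟨(k + 2 - l) / 3, by omega⟩
    obtain ⟨s, n, hs, hn⟩ := H i
    rw [← hi] at hn
    obtain ⟨N, hg, hN⟩ := h.exists_int_near_two hk
    have p1 := h.X_pos (k := k+1) (by omega)
    obtain ⟨y, hy, hy'⟩ := exists_int_near_of_sign (F := K * κ⁻¹ / X (k+1)) hs hg hN (by
      calc _ ≤ X k * (K / X (k+2)) :=
            mul_le_mul (h.a_le k hk) hn (abs_nonneg _) (h.X_pos hk).le
        _ = K * (X k / X (k+2)) := by ring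
        _ ≤ K * (κ⁻¹ / X (k+1)) := mul_le_mul_of_nonneg_left (h.ratio_le hk) hK.le
        _ = _ := by ring)
    refine ⟨y, hy, hy'.trans ?_⟩
    rw [← add_div, div_eq_mul_inv]
    refine mul_le_mul_of_nonneg_right ?_ (inv_pos.2 p1).le
    have : 0 < C * κ⁻¹ := by positivity
    linarith
  · obtain ⟨i, hi⟩ : ∃ i, k + 4 = l + 3 * i := ⟨(k + 4 - l) / 3, by omega⟩
    obtain ⟨s, n, hs, hn⟩ := H i
    rw [← hi] at hn
    obtain ⟨N, hg, hN⟩ := h.exists_int_near_four hk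
    have p2 := h.X_pos (k := k+2) (by omega)
    have p4 := h.X_pos (k := k+4) (by omega)
    obtain ⟨y, hy, hy'⟩ := exists_int_near_of_sign (F := K * κ⁻¹ / X (k+2)) hs hg hN (by
      calc _ ≤ X k * (K / X (k+4)) :=
            mul_le_mul (h.a_le k hk) hn (abs_nonneg _) (h.X_pos hk).le
        _ = K * (X k / X (k+4)) := by ring
        _ ≤ K * (X (k+2) / X (k+4)) := by gcongr; exact h.X_mono hk (by omega)
        _ ≤ K * (κ⁻¹ / X (k+3)) :=
          mul_le_mul_of_nonneg_left (h.ratio_le (k := k+2) (by omega)) hK.le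
        _ ≤ K * (κ⁻¹ / X (k+2)) := by gcongr; exact h.X_mono (by omega) (by omega)
        _ = _ := by ring)
    refine ⟨y, hy, hy'.trans (le_of_eq ?_)⟩
    rw [← add_div, div_eq_mul_inv]

end MarkoffData

lemma GenContFract.exists_int_contsAux (v : ℝ) (n : ℕ) :
    (∃ A B : ℤ, (GenContFract.of v).contsAux n = ⟨A, B⟩) ∧
    (∃ A B : ℤ, (GenContFract.of v).contsAux (n+1) = ⟨A, B⟩) := by
  induction n with
  | zero =>
    refine ⟨⟨1, 0, ?_⟩, ⟨⌊v⌋, 1, ?_⟩⟩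
    · simp [GenContFract.contsAux]
    · simp [GenContFract.contsAux, GenContFract.of_h_eq_floor]
  | succ n ih =>
    obtain ⟨⟨A, B, h1⟩, ⟨A', B', h2⟩⟩ := ih
    refine ⟨⟨A', B', h2⟩, ?_⟩
    cases hs : (GenContFract.of v).s.get? n with
    | none =>
      refine ⟨A', B', ?_⟩
      rw [← h2]
      exact GenContFract.contsAux_stable_step_of_terminated hs
    | some gp =>
      obtain ⟨ha, z, hz⟩ := GenContFract.of_partNum_eq_one_and_exists_int_partDen_eq hs
      rw [GenContFract.contsAux_recurrence hs h1 h2, ha, hz]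
      exact ⟨z * A' + A, z * B' + B, by push_cast; simp⟩

/-- A convergent `p / q` in lowest terms of an irrational number has error at most `1 / q`. -/
lemma abs_mul_sub_le_of_convs {δ : ℝ} (hδ : Irrational δ) {p : ℤ} {q n : ℕ} (hq : 0 < q)
    (hpq : Nat.Coprime p.natAbs q) (h : (GenContFract.of δ).convs n = (p : ℝ) / q) :
    |(q : ℝ) * δ - p| ≤ 1 / q := by
  have hterm : ∀ n, ¬ (GenContFract.of δ).TerminatedAt n := fun n hn => by
    obtain ⟨r, hr⟩ := GenContFract.exists_rat_eq_of_terminates ⟨n, hn⟩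
    exact hδ ⟨r, hr.symm⟩
  obtain ⟨-, A, B, hAB⟩ := GenContFract.exists_int_contsAux δ n
  have hden : (GenContFract.of δ).dens n = B := by
    rw [GenContFract.den_eq_conts_b, GenContFract.nth_cont_eq_succ_nth_contAux, hAB]
  have hnum : (GenContFract.of δ).nums n = A := by
    rw [GenContFract.num_eq_conts_a, GenContFract.nth_cont_eq_succ_nth_contAux, hAB]
  have hBpos : (0 : ℝ) < B := by
    rw [← hden]
    have h1 := GenContFract.succ_nth_fib_le_of_nth_den (v := δ) (n := n) (Or.inr (hterm _))
    have h2 : 0 < Nat.fib (n+1) := Nat.fib_pos.2 (by omega)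
    have h3 : (0 : ℝ) < Nat.fib (n+1) := by exact_mod_cast h2
    exact h3.trans_le h1
  have hq' : (0 : ℝ) < q := by exact_mod_cast hq
  have hcross : A * q = p * B := by
    have := h
    rw [GenContFract.conv_eq_num_div_den, hden, hnum, div_eq_div_iff hBpos.ne' hq'.ne'] at this
    exact_mod_cast this
  have hdvd : (q : ℤ) ∣ B := by
    have h1 : (q : ℤ) ∣ p * B := ⟨A, by rw [← hcross]; ring⟩
    exact IsCoprime.dvd_of_dvd_mul_left (by
      rw [Int.isCoprime_iff_nat_coprime]; simpa using hpq.symm) h1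
  have hqB : (q : ℝ) ≤ B := by
    have : (q : ℤ) ≤ B := Int.le_of_dvd (by exact_mod_cast hBpos) hdvd
    exact_mod_cast this
  have key := GenContFract.abs_sub_convs_le (hterm n)
  have hmono := GenContFract.of_den_mono (v := δ) (n := n)
  rw [hden] at key hmono
  rw [h] at key
  have hB2 : δ - (p : ℝ) / q = (q * δ - p) / q := by field_simp
  rw [hB2, abs_div, abs_of_pos hq', div_le_iff₀ hq'] at key
  refine key.trans ?_
  rw [div_mul_eq_mul_div, one_mul, div_le_div_iff₀ (mul_pos hBpos (hBpos.trans_le hmono)) hq',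
    one_mul]
  exact mul_le_mul hqB (hqB.trans hmono) hq'.le hBpos.le

lemma den_div_of_gcd_dvd_two {a y : ℤ} (ha : a ≠ 0) (h : Int.gcd a y ∣ 2) :
    ((y : ℚ) / (a : ℚ)).den = a.natAbs ∨ 2 * ((y : ℚ) / (a : ℚ)).den = a.natAbs := by
  have e : ((y : ℚ) / (a : ℚ)).den = a.natAbs / Int.gcd a y := by
    rw [← Rat.divInt_eq_div, Rat.den_divInt, if_neg ha, Int.gcd_comm, Int.gcd]
  have hg : Int.gcd a y ∣ a.natAbs := Int.natCast_dvd.1 (Int.gcd_dvd_left a y)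
  rcases (Nat.dvd_prime Nat.prime_two).1 h with h1 | h1
  · left; rw [e, h1, Nat.div_one]
  · right; rw [e, h1, Nat.mul_div_cancel' (h1 ▸ hg)]

/-- The successor of `k` among the indices not congruent to `l` modulo `3`. -/
def nextIndex (l k : ℕ) : ℕ := if k % 3 = (l+1) % 3 then k+1 else k+2

lemma nextIndex_mod_ne (l k : ℕ) : nextIndex l k % 3 ≠ l % 3 := by
  unfold nextIndex; split_ifs <;> omega

lemma lt_nextIndex (l k : ℕ) : k + 1 ≤ nextIndex l k := by
  unfold nextIndex; split_ifs <;> omega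

lemma one_le_abs_mul_sub {p q r s : ℤ} (h : p * s ≠ r * q) (δ : ℝ) :
    1 ≤ |(s : ℝ)| * |(q : ℝ) * δ - p| + |(q : ℝ)| * |(s : ℝ) * δ - r| := by
  have h1 : (1 : ℝ) ≤ |((p * s - r * q : ℤ) : ℝ)| := by
    exact_mod_cast Int.one_le_abs (sub_ne_zero.2 h)
  refine h1.trans ?_
  have e : ((p * s - r * q : ℤ) : ℝ) = q * (s * δ - r) - s * (q * δ - p) := by
    push_cast; ring
  rw [e]
  refine (abs_sub _ _).trans ?_
  rw [abs_mul, abs_mul, add_comm]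

namespace MarkoffData

variable {ξ : ℝ} {a b c : ℕ → ℤ} {X : ℕ → ℝ} {C D κ : ℝ}

lemma a_ne_zero (h : MarkoffData ξ a b c X C D κ) {k : ℕ} (hk : 1 ≤ k) : a k ≠ 0 := by
  intro h0
  have := h.le_a k hk
  have := h.X_pos hk
  simp_all
  linarith

lemma eventually_mul_le (h : MarkoffData ξ a b c X C D κ) (M : ℝ) :
    ∀ᶠ k in atTop, M * X k ≤ X (k+1) := by
  obtain ⟨N, hN⟩ := eventually_atTop.1 (h.tendsto.eventually_ge_atTop (M / κ))
  refine eventually_atTop.2 ⟨N + 2, fun k hk => ?_⟩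
  obtain ⟨j, rfl⟩ : ∃ j, k = j + 1 := ⟨k - 1, by omega⟩
  have h1 := hN j (by omega)
  have h2 := h.mul_le j (by omega)
  have h3 := h.X_pos (k := j+1) (by omega)
  rw [div_le_iff₀ h.κ_pos] at h1
  have h4 := mul_le_mul_of_nonneg_right h1 h3.le
  calc M * X (j+1) ≤ X j * κ * X (j+1) := h4
    _ = κ * (X j * X (j+1)) := by ring
    _ ≤ X (j+2) := h2

variable {l : ℕ} {δ A : ℝ} {y : ℕ → ℤ}

lemma eventually_mul_ne (h : MarkoffData ξ a b c X C D κ)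
    (hg : ∀ k, 1 ≤ k → k % 3 ≠ l % 3 → Int.gcd (a k) (y k) ∣ 2) :
    ∀ᶠ k in atTop, k % 3 ≠ l % 3 →
      y k * a (nextIndex l k) ≠ y (nextIndex l k) * a k := by
  filter_upwards [h.eventually_mul_le (2 * D + 1), eventually_ge_atTop 1] with k hk hk1 hkl heq
  have hn := lt_nextIndex l k
  have hn1 : 1 ≤ nextIndex l k := by omega
  have ha := h.a_ne_zero hk1
  have ha' := h.a_ne_zero hn1
  have hq : (y k : ℚ) / a k = (y (nextIndex l k) : ℚ) / a (nextIndex l k) := by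
    rw [div_eq_div_iff (by exact_mod_cast ha) (by exact_mod_cast ha')]
    exact_mod_cast heq
  have d1 := den_div_of_gcd_dvd_two ha (hg k hk1 hkl)
  have d2 := den_div_of_gcd_dvd_two ha' (hg _ hn1 (nextIndex_mod_ne l k))
  rw [← hq] at d2
  have hle : (a (nextIndex l k)).natAbs ≤ 2 * (a k).natAbs := by omega
  have hle' : |(a (nextIndex l k) : ℝ)| ≤ 2 * |(a k : ℝ)| := by
    rw [← Int.cast_abs, ← Int.cast_abs, Int.abs_eq_natAbs, Int.abs_eq_natAbs]
    exact_mod_cast hle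
  have h1 := h.le_a _ hn1
  have h2 := h.X_mono (by omega) hn
  have h3 := h.a_le k hk1
  have h4 := h.X_pos hk1
  have h5 : D * |(a (nextIndex l k) : ℝ)| ≤ D * (2 * X k) :=
    mul_le_mul_of_nonneg_left (by linarith) h.D_pos.le
  linarith

lemma irrational_delta (h : MarkoffData ξ a b c X C D κ)
    (hg : ∀ k, 1 ≤ k → k % 3 ≠ l % 3 → Int.gcd (a k) (y k) ∣ 2)
    (hy : ∀ k, 1 ≤ k → k % 3 ≠ l % 3 → |(a k : ℝ) * δ - y k| ≤ A * (X (nextIndex l k))⁻¹) :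
    Irrational δ := by
  rintro ⟨r, rfl⟩
  have hd : (0 : ℝ) < r.den := by exact_mod_cast r.den_pos
  have hev : ∀ᶠ k in atTop, k % 3 ≠ l % 3 → a k * r.num = y k * r.den := by
    filter_upwards [h.tendsto.eventually_gt_atTop (A * r.den), eventually_ge_atTop 1]
      with k hk hk1 hkl
    have hn := lt_nextIndex l k
    have hX := h.X_pos (k := nextIndex l k) (by omega)
    have h1 := hy k hk1 hkl
    have h2 := h.X_mono hk1 (show k ≤ nextIndex l k by omega)
    have hr : (r : ℝ) * r.den = r.num := by exact_mod_cast Rat.mul_den_eq_num r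
    have h3 : |((a k * r.num - y k * r.den : ℤ) : ℝ)| < 1 := by
      have e : ((a k * r.num - y k * r.den : ℤ) : ℝ) = ((a k : ℝ) * r - y k) * r.den := by
        push_cast; linear_combination (-(a k : ℝ)) * hr
      rw [e, abs_mul, abs_of_pos hd]
      calc _ ≤ A * (X (nextIndex l k))⁻¹ * r.den := mul_le_mul_of_nonneg_right h1 hd.le
        _ = A * r.den / X (nextIndex l k) := by ring
        _ < 1 := by rw [div_lt_one hX]; linarith
    have h4 : |a k * r.num - y k * r.den| < 1 := by exact_mod_cast h3
    exact sub_eq_zero.1 (Int.abs_lt_one_iff.1 h4)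
  obtain ⟨N, hN⟩ := eventually_atTop.1 (hev.and (h.eventually_mul_ne hg))
  obtain ⟨k, hk, hkl⟩ : ∃ k, N ≤ k ∧ k % 3 ≠ l % 3 := by
    by_cases hNl : N % 3 = l % 3
    · exact ⟨N + 1, by omega, by omega⟩
    · exact ⟨N, le_rfl, hNl⟩
  have hn := lt_nextIndex l k
  have h1 := (hN k hk).1 hkl
  have h2 := (hN (nextIndex l k) (by omega)).1 (nextIndex_mod_ne l k)
  refine (hN k hk).2 hkl ?_
  have hd' : (r.den : ℤ) ≠ 0 := by exact_mod_cast r.den_ne_zero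
  apply mul_right_cancel₀ hd'
  linear_combination a k * h2 - a (nextIndex l k) * h1

lemma exists_lower_bound (h : MarkoffData ξ a b c X C D κ)
    (hg : ∀ k, 1 ≤ k → k % 3 ≠ l % 3 → Int.gcd (a k) (y k) ∣ 2)
    (hy : ∀ k, 1 ≤ k → k % 3 ≠ l % 3 → |(a k : ℝ) * δ - y k| ≤ A * (X (nextIndex l k))⁻¹) :
    ∃ ε : ℝ, 0 < ε ∧ ∀ k, 1 ≤ k → k % 3 ≠ l % 3 →
      ε * (X (nextIndex l k))⁻¹ ≤ |(a k : ℝ) * δ - y k| := by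
  have hirr := h.irrational_delta hg hy
  obtain ⟨ε, hε, H⟩ := exists_pos_le_of_eventually
    (f := fun k => |(a k : ℝ) * δ - y k| * X (nextIndex l k))
    (P := fun k => 1 ≤ k ∧ k % 3 ≠ l % 3) (ε := 1/2) (fun k hk => by
      have hn := lt_nextIndex l k
      refine mul_pos (abs_pos.2 ?_) (h.X_pos (by omega))
      exact ((hirr.intCast_mul (h.a_ne_zero hk.1)).sub_intCast _).ne_zero) (by norm_num) (by
      filter_upwards [h.eventually_mul_ne hg, h.eventually_mul_le (2 * A)] with k hne hM hk
      have hn := lt_nextIndex l k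
      have hnn := lt_nextIndex l (nextIndex l k)
      have h1 := one_le_abs_mul_sub (hne hk.2) δ
      have h2 := hy (nextIndex l k) (by omega) (nextIndex_mod_ne l k)
      have h3 := h.a_le (nextIndex l k) (by omega)
      have h4 := h.a_le k hk.1
      have h5 := h.X_mono (by omega) (show k + 1 ≤ nextIndex l (nextIndex l k) by omega)
      have hX0 := h.X_pos hk.1
      have hX2 := h.X_pos (k := nextIndex l (nextIndex l k)) (by omega)
      have h6 : |(a k : ℝ)| * |(a (nextIndex l k) : ℝ) * δ - y (nextIndex l k)| ≤ 1/2 :=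
        calc _ ≤ X k * (A * (X (nextIndex l (nextIndex l k)))⁻¹) :=
              mul_le_mul h4 h2 (abs_nonneg _) hX0.le
          _ = A * X k / X (nextIndex l (nextIndex l k)) := by ring
          _ ≤ 1/2 := by rw [div_le_iff₀ hX2]; linarith
      have h7 := mul_le_mul_of_nonneg_right h3 (abs_nonneg ((a k : ℝ) * δ - y k))
      linarith)
  refine ⟨ε, hε, fun k hk hkl => ?_⟩
  have hn := lt_nextIndex l k
  rw [← div_eq_mul_inv, div_le_iff₀ (h.X_pos (by omega))]
  exact H k ⟨hk, hkl⟩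

lemma eventually_convs (h : MarkoffData ξ a b c X C D κ)
    (hg : ∀ k, 1 ≤ k → k % 3 ≠ l % 3 → Int.gcd (a k) (y k) ∣ 2)
    (hy : ∀ k, 1 ≤ k → k % 3 ≠ l % 3 → |(a k : ℝ) * δ - y k| ≤ A * (X (nextIndex l k))⁻¹)
    (hA : 0 < A) :
    ∀ᶠ k in atTop, k % 3 ≠ l % 3 →
      ∃ n : ℕ, (GenContFract.of δ).convs n = (y k : ℝ) / (a k : ℝ) := by
  filter_upwards [h.eventually_mul_le (2 * A + 1), eventually_ge_atTop 1] with k hM hk1 hkl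
  have hn := lt_nextIndex l k
  have hX0 := h.X_pos hk1
  have hX := h.X_pos (k := nextIndex l k) (by omega)
  have hmono := h.X_mono (by omega) hn
  have ha := h.a_ne_zero hk1
  have ha' : (0 : ℝ) < |(a k : ℝ)| := abs_pos.2 (by exact_mod_cast ha)
  have hden : (((y k : ℚ) / (a k : ℚ)).den : ℝ) ≤ |(a k : ℝ)| := by
    rw [← Int.cast_abs, Int.abs_eq_natAbs]
    have := den_div_of_gcd_dvd_two ha (hg k hk1 hkl)
    have : ((y k : ℚ) / (a k : ℚ)).den ≤ (a k).natAbs := by omega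
    exact_mod_cast this
  have hdpos : (0 : ℝ) < ((y k : ℚ) / (a k : ℚ)).den := by exact_mod_cast Rat.den_pos _
  obtain ⟨n, hn'⟩ := Real.exists_convs_eq_rat (ξ := δ) (q := (y k : ℚ) / (a k : ℚ)) (by
    have e : δ - (((y k : ℚ) / (a k : ℚ) : ℚ) : ℝ) = ((a k : ℝ) * δ - y k) / a k := by
      have : (a k : ℝ) ≠ 0 := by exact_mod_cast ha
      push_cast; field_simp
    rw [e, abs_div]
    calc _ ≤ A * (X (nextIndex l k))⁻¹ / |(a k : ℝ)| := by gcongr; exact hy k hk1 hkl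
      _ = A / (X (nextIndex l k) * |(a k : ℝ)|) := by field_simp
      _ < 1 / (2 * |(a k : ℝ)| ^ 2) := by
        rw [div_lt_div_iff₀ (by positivity) (by positivity)]
        have h1 := h.a_le k hk1
        have h2 : 2 * A * |(a k : ℝ)| < X (nextIndex l k) := by
          have := mul_le_mul_of_nonneg_left h1 (by positivity : 0 ≤ 2 * A)
          linarith
        have := mul_lt_mul_of_pos_right h2 ha'
        linarith
      _ ≤ 1 / (2 * (((y k : ℚ) / (a k : ℚ)).den : ℝ) ^ 2) := by gcongr)
  exact ⟨n, by rw [hn']; push_cast; rfl⟩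

lemma exists_lower_bound_of_ne (h : MarkoffData ξ a b c X C D κ)
    (hy : ∀ k, 1 ≤ k → k % 3 ≠ l % 3 → |(a k : ℝ) * δ - y k| ≤ A * (X (nextIndex l k))⁻¹)
    (hA : 0 < A) :
    ∃ ε : ℝ, 0 < ε ∧ ∀ p : ℤ, ∀ q : ℕ, 0 < q →
      (∀ k, 1 ≤ k → k % 3 ≠ l % 3 → (p : ℚ) / q ≠ (y k : ℚ) / (a k : ℚ)) →
      ε / q ≤ |(q : ℝ) * δ - p| := by
  have X1 := h.X_pos (k := 1) le_rfl
  have X2 := h.X_pos (k := 2) (by omega)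
  refine ⟨min (1 / (4 * A)) (1 / (2 * X 2)), by positivity, fun p q hq hne => ?_⟩
  have hq' : (0 : ℝ) < q := by exact_mod_cast hq
  have hq1 : (1 : ℝ) ≤ q := by exact_mod_cast hq
  have hex : ∃ k, 1 ≤ k ∧ k % 3 ≠ l % 3 ∧ 2 * A * q ≤ X (nextIndex l k) := by
    obtain ⟨N, hN⟩ := eventually_atTop.1 (h.tendsto.eventually_ge_atTop (2 * A * q))
    by_cases hNl : (N + 1) % 3 = l % 3
    · exact ⟨N + 2, by omega, by omega, hN _ (by have := lt_nextIndex l (N+2); omega)⟩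
    · exact ⟨N + 1, by omega, hNl, hN _ (by have := lt_nextIndex l (N+1); omega)⟩
  classical
  obtain ⟨hk1, hkl, hkq⟩ := Nat.find_spec hex
  have hmin := fun j => Nat.find_min (m := j) hex
  set k := Nat.find hex
  have hn := lt_nextIndex l k
  have hX := h.X_pos (k := nextIndex l k) (by omega)
  have hX0 := h.X_pos hk1
  have ha := h.a_ne_zero hk1
  have hcross : p * a k ≠ y k * (q : ℤ) := fun heq => hne k hk1 hkl (by
    rw [div_eq_div_iff (by exact_mod_cast hq.ne') (by exact_mod_cast ha)]
    exact_mod_cast heq)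
  have h1 := one_le_abs_mul_sub hcross δ
  have h2 : |((q : ℤ) : ℝ)| * |(a k : ℝ) * δ - y k| ≤ 1/2 := by
    rw [Int.cast_natCast, abs_of_pos hq']
    calc _ ≤ (q : ℝ) * (A * (X (nextIndex l k))⁻¹) :=
          mul_le_mul_of_nonneg_left (hy k hk1 hkl) hq'.le
      _ = A * q / X (nextIndex l k) := by ring
      _ ≤ 1/2 := by rw [div_le_iff₀ hX]; linarith
  have h3 : 1/2 ≤ X k * |(q : ℝ) * δ - p| := by
    have := mul_le_mul_of_nonneg_right (h.a_le k hk1) (abs_nonneg ((q : ℝ) * δ - p))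
    rw [Int.cast_natCast] at h1 h2
    linarith
  have h4 : 1 / (2 * X k) ≤ |(q : ℝ) * δ - p| := by
    rw [div_le_iff₀ (by positivity)]; linarith
  refine le_trans ?_ h4
  by_cases hprev : ∃ j, 1 ≤ j ∧ j % 3 ≠ l % 3 ∧ nextIndex l j = k
  · obtain ⟨j, hj1, hjl, hjk⟩ := hprev
    have hjn := lt_nextIndex l j
    have h5 : X k < 2 * A * q := by
      by_contra hcon
      exact hmin j (by omega) ⟨hj1, hjl, by rw [hjk]; linarith⟩
    calc _ ≤ 1 / (4 * A) / q := by gcongr; exact min_le_left _ _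
      _ = 1 / (2 * (2 * A * q)) := by field_simp; norm_num
      _ ≤ 1 / (2 * X k) := by gcongr
  · have hk2 : k ≤ 2 := by
      by_contra hcon
      push Not at hcon
      apply hprev
      by_cases hc : (k - 1) % 3 = l % 3
      · exact ⟨k - 2, by omega, by omega, by unfold nextIndex; split_ifs <;> omega⟩
      · exact ⟨k - 1, by omega, hc, by unfold nextIndex; split_ifs <;> omega⟩
    have h6 := h.X_mono hk1 hk2
    calc _ ≤ 1 / (2 * X 2) / q := by gcongr; exact min_le_right _ _
      _ ≤ 1 / (2 * X 2) / 1 := by gcongr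
      _ = 1 / (2 * X 2) := div_one _
      _ ≤ 1 / (2 * X k) := by gcongr

end MarkoffData

lemma gold_mul_sub_one : gold * (gold - 1) = 1 := by
  have h : Real.sqrt 5 * Real.sqrt 5 = 5 := Real.mul_self_sqrt (by norm_num)
  unfold gold
  linear_combination h / 4

lemma rpow_mul_le_of_gold_growth {u v w r : ℝ} (hr : 0 < r) (hu : 0 < u) (hv : 0 < v)
    (huv : r * u ^ gold ≤ v) (hvw : r * v ^ gold ≤ w) : r * r ^ (gold - 1) * (u * v) ≤ w := by
  have hg : 0 ≤ gold - 1 := by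
    have := Real.one_le_sqrt.2 (by norm_num : (1 : ℝ) ≤ 5)
    unfold gold
    linarith
  have h1 : (r * u ^ gold) ^ (gold - 1) ≤ v ^ (gold - 1) :=
    Real.rpow_le_rpow (by positivity) huv hg
  rw [Real.mul_rpow hr.le (by positivity), ← Real.rpow_mul hu.le, gold_mul_sub_one,
    Real.rpow_one] at h1
  have h2 : v ^ gold = v ^ (gold - 1) * v := by
    rw [Real.rpow_sub_one hv.ne', div_mul_cancel₀ _ hv.ne']
  calc r * r ^ (gold - 1) * (u * v) = r * (r ^ (gold - 1) * u * v) := by ring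
    _ ≤ r * (v ^ (gold - 1) * v) := by gcongr
    _ = r * v ^ gold := by rw [h2]
    _ ≤ w := hvw

lemma Xnorm_eq_intCast (x : ℕ → Matrix (Fin 2) (Fin 2) ℤ) (k : ℕ) :
    Xnorm x k = ((max |x k 0 0| (max |x k 0 1| |x k 1 1|) : ℤ) : ℝ) := by
  unfold Xnorm
  push_cast
  rfl

lemma tendsto_Xnorm {x : ℕ → Matrix (Fin 2) (Fin 2) ℤ}
    (h : ∀ k, 1 ≤ k → Xnorm x k < Xnorm x (k+1)) : Tendsto (Xnorm x) atTop atTop := by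
  have hstep : ∀ k, 1 ≤ k → Xnorm x k + 1 ≤ Xnorm x (k+1) := fun k hk => by
    have := h k hk
    rw [Xnorm_eq_intCast, Xnorm_eq_intCast] at this ⊢
    exact_mod_cast Int.add_one_le_of_lt (by exact_mod_cast this)
  have hle : ∀ k : ℕ, (k : ℝ) ≤ Xnorm x (k+1) := fun k => by
    induction k with
    | zero => simp [Xnorm]
    | succ k ih =>
      have := hstep (k+1) (by omega)
      push_cast
      linarith
  exact (tendsto_add_atTop_iff_nat 1).1
    (tendsto_atTop_mono hle tendsto_natCast_atTop_atTop)

lemma MarkoffSeq.exists_markoffData {ξ : ℝ} {x : ℕ → Matrix (Fin 2) (Fin 2) ℤ}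
    (hx : MarkoffSeq ξ x) : ∃ C D κ : ℝ,
      MarkoffData ξ (fun k => x k 0 0) (fun k => x k 0 1) (fun k => x k 1 1) (Xnorm x) C D κ := by
  obtain ⟨hsymm, hdet, c₁, c₂, c₃, hc₁, -, hc₃, H⟩ := hx
  have hent : ∀ k, 1 ≤ k → ∀ i j, x (k+2) i j =
      (3 * x k i 0 - (-1)^k * x k i 1) * x (k+1) 0 j + (-1)^k * x k i 0 * x (k+1) 1 j := by
    intro k hk i j
    rw [(H k hk).2.2.1.2]
    simp only [Matrix.mul_apply, Fin.sum_univ_two, Mmat, Matrix.of_apply, Matrix.cons_val_zero,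
      Matrix.cons_val_one, Matrix.cons_val', Matrix.cons_val_fin_one, pow_succ]
    ring
  have hone : ∀ k, 1 ≤ k → 1 ≤ Xnorm x k := by
    intro k hk
    have h1 := (H k hk).2.2.2.2
    have h2 : |(x k 0 0 : ℝ)| ≤ Xnorm x k := le_max_left _ _
    have h3 : x k 0 0 ≠ 0 := by
      intro h0
      rw [h0, Int.cast_zero, abs_zero, mul_zero] at h1
      exact absurd ((abs_nonneg _).trans h2) (not_le.2 h1)
    refine le_trans ?_ h2
    exact_mod_cast Int.one_le_abs h3
  exact ⟨c₃, 1 + ξ^2, c₁ * c₁ ^ (gold - 1),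
    { det := fun k hk => by
        have h1 := hdet k hk
        rw [Matrix.det_fin_two, ← hsymm k hk] at h1
        linarith
      rec_a := fun k hk => by
        rw [hent k hk, hsymm (k+1) (by omega)]
      rec_b := fun k hk => hent k hk 0 1
      rec_b' := fun k hk => by
        rw [hsymm (k+2) (by omega), hent k hk, hsymm k hk, hsymm (k+1) (by omega)]
      rec_c := fun k hk => by
        rw [hent k hk, hsymm k hk]
      C_pos := hc₃
      D_pos := by positivity
      κ_pos := by positivity
      approx_b := fun k hk => (H k hk).2.1.1
      approx_c := fun k hk => (H k hk).2.1.2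
      one_le := hone
      a_le := fun k _ => le_max_left _ _
      b_le := fun k _ => (le_max_left _ _).trans (le_max_right _ _)
      c_le := fun k _ => (le_max_right _ _).trans (le_max_right _ _)
      le_a := fun k hk => (H k hk).2.2.2.2.le
      lt_succ := fun k hk => (H k hk).2.2.2.1
      tendsto := tendsto_Xnorm fun k hk => (H k hk).2.2.2.1
      mul_le := fun k hk => rpow_mul_le_of_gold_growth hc₁
        (zero_lt_one.trans_le (hone k hk)) (zero_lt_one.trans_le (hone (k+1) (by omega)))
        (H k hk).1.1 (H (k+1) (by omega)).1.1 }⟩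

theorem stmt12 (ξ : ℝ) (x : ℕ → Matrix (Fin 2) (Fin 2) ℤ) (hx : MarkoffSeq ξ x)
    (ℓ : ℕ) (hℓ : ℓ ∈ ({1, 2, 3} : Set ℕ)) :
    ∃ δ : ℝ,
      Tendsto (fun i : ℕ => distInt ((x (ℓ+6*i) 0 0 : ℝ) * ξ^3)) atTop (nhds δ) ∧
      ∃ y : ℕ → ℤ, ∃ c₄ c₅ : ℝ, 0 < c₄ ∧ 0 < c₅ ∧
        (∀ k, 1 ≤ k → k % 3 ≠ ℓ % 3 →
          (Int.gcd (x k 0 0) (y k) ∣ 2) ∧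
          c₄ * (if k % 3 = (ℓ+1) % 3 then (Xnorm x (k+1))⁻¹ else (Xnorm x (k+2))⁻¹)
            ≤ |(x k 0 0 : ℝ) * δ - (y k : ℝ)| ∧
          |(x k 0 0 : ℝ) * δ - (y k : ℝ)|
            ≤ c₅ * (if k % 3 = (ℓ+1) % 3 then (Xnorm x (k+1))⁻¹ else (Xnorm x (k+2))⁻¹)) ∧
        (∃ N : ℕ, ∀ k, N ≤ k → k % 3 ≠ ℓ % 3 →
          (∃ n : ℕ, (GenContFract.of δ).convs n = (y k : ℝ) / (x k 0 0 : ℝ)) ∧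
          (((y k : ℚ) / (x k 0 0 : ℚ)).den = (x k 0 0).natAbs ∨
            2 * ((y k : ℚ) / (x k 0 0 : ℚ)).den = (x k 0 0).natAbs)) ∧
        ∃ c₆ c₇ : ℝ, 0 < c₆ ∧ 0 < c₇ ∧
          ∀ p : ℤ, ∀ q : ℕ, 0 < q → Nat.Coprime p.natAbs q →
            (∃ n : ℕ, (GenContFract.of δ).convs n = (p : ℝ) / (q : ℝ)) →
            (∀ k, 1 ≤ k → k % 3 ≠ ℓ % 3 →
              (p : ℚ) / (q : ℚ) ≠ (y k : ℚ) / (x k 0 0 : ℚ)) →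
            c₆ / q ≤ |(q : ℝ) * δ - (p : ℝ)| ∧ |(q : ℝ) * δ - (p : ℝ)| ≤ c₇ / q := by
  obtain ⟨C, D, κ, h⟩ := hx.exists_markoffData
  have hl : 1 ≤ ℓ ∧ ℓ ≤ 3 := by
    rcases hℓ with rfl | rfl | rfl <;> norm_num
  obtain ⟨δ, hδ, K, hK, HK⟩ := h.exists_delta hl.1
  obtain ⟨A, hA, HA⟩ := h.exists_approximations hl.1 hl.2 hK HK
  choose! y hg hy using HA
  obtain ⟨c₄, hc₄, H₄⟩ := h.exists_lower_bound (l := ℓ) hg hy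
  obtain ⟨N, hN⟩ := eventually_atTop.1 (h.eventually_convs (l := ℓ) hg hy hA)
  obtain ⟨c₆, hc₆, H₆⟩ := h.exists_lower_bound_of_ne (l := ℓ) hy hA
  have hirr := h.irrational_delta (l := ℓ) hg hy
  have hnext : ∀ k, (if k % 3 = (ℓ+1) % 3 then (Xnorm x (k+1))⁻¹ else (Xnorm x (k+2))⁻¹) =
      (Xnorm x (nextIndex ℓ k))⁻¹ := fun k => by
    unfold nextIndex
    split_ifs <;> rfl
  refine ⟨δ, hδ, y, c₄, A, hc₄, hA, fun k hk hkl => ?_, ⟨N + 1, fun k hk hkl => ?_⟩,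
    c₆, 1, hc₆, one_pos, fun p q hq hpq ⟨n, hn⟩ hne => ?_⟩
  · rw [hnext]
    exact ⟨hg k hk hkl, H₄ k hk hkl, hy k hk hkl⟩
  · exact ⟨hN k (by omega) hkl,
      den_div_of_gcd_dvd_two (h.a_ne_zero (by omega)) (hg k (by omega) hkl)⟩
  · exact ⟨H₆ p q hq hne, abs_mul_sub_le_of_convs hirr hq hpq hn⟩
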